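/- arXiv:2401.02520 — 2 statements merged into one kernel-verified Lean document; each statement's English description precedes it below -/
import Mathlib

section
/- (Key separation lemma.) There exists a universal constant c̃ > 0 such that the following holds for all integers p ≥ r ≥ 1 and every μ > 0. Let P = UΣVᵀ and Q = LΛRᵀ, where U, V, L, R ∈ O_{p,r} are all μ-incoherent, Σ = diag(σ₁, …, σ_r) with σ₁ ≥ σ₂ ≥ … ≥ σ_r ≥ 0, and Λ = diag(λ₁, …, λ_r) with λ₁ ≥ λ₂ ≥ … ≥ λ_r ≥ 0. Then, with Δ = P − Q, one has ‖Δ‖_max² ≤ (c̃ μ r⁴ / p)·‖Δ‖_F². In particular, if Δ ≠ 0 then ‖Δ‖_max²/‖Δ‖_F² ≤ c̃ μ r⁴ / p. -/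
open Matrix
open scoped BigOperators RealInnerProductSpace

noncomputable def frobNorm {m n : Type*} [Fintype m] [Fintype n] (M : Matrix m n ℝ) : ℝ :=
  Real.sqrt (∑ i, ∑ j, (M i j) ^ 2)

noncomputable def frobInner {m n : Type*} [Fintype m] [Fintype n] (A B : Matrix m n ℝ) : ℝ :=
  ∑ i, ∑ j, A i j * B i j

noncomputable def maxNorm {m n : Type*} [Fintype m] [Fintype n] (M : Matrix m n ℝ) : ℝ :=
  ⨆ i, ⨆ j, |M i j|

noncomputable def l0Norm {m n : Type*} (M : Matrix m n ℝ) : ℕ :=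
  Set.ncard {ij : m × n | M ij.1 ij.2 ≠ 0}

noncomputable def specNorm {p q : ℕ} (M : Matrix (Fin p) (Fin q) ℝ) : ℝ :=
  ‖LinearMap.toContinuousLinearMap (Matrix.toEuclideanLin M)‖

def Incoherent {p r : ℕ} (μ : ℝ) (U : Matrix (Fin p) (Fin r) ℝ) : Prop :=
  ∀ i, Real.sqrt (∑ j, (U i j) ^ 2) ≤ Real.sqrt (μ * r / p)

def SepProp (p r : ℕ) (μ c : ℝ) : Prop :=
  ∀ (U V L R : Matrix (Fin p) (Fin r) ℝ) (S Lam : Matrix (Fin r) (Fin r) ℝ),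
    Uᵀ * U = 1 → Vᵀ * V = 1 → Lᵀ * L = 1 → Rᵀ * R = 1 →
    Incoherent μ U → Incoherent μ V → Incoherent μ L → Incoherent μ R →
    S.IsDiag → (∀ i, 0 ≤ S i i) → Lam.IsDiag → (∀ i, 0 ≤ Lam i i) →
    maxNorm (U * S * Vᵀ - L * Lam * Rᵀ) ^ 2 ≤
      (c * μ * (r : ℝ) ^ 4 / p) * frobNorm (U * S * Vᵀ - L * Lam * Rᵀ) ^ 2

noncomputable def l1Norm {m n : Type*} [Fintype m] [Fintype n] (M : Matrix m n ℝ) : ℝ :=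
  ∑ i, ∑ j, |M i j|

noncomputable def nuclearNorm {p q : ℕ} (M : Matrix (Fin p) (Fin q) ℝ) : ℝ :=
  sSup {x : ℝ | ∃ X : Matrix (Fin p) (Fin q) ℝ, specNorm X ≤ 1 ∧ x = frobInner M X}

noncomputable def Phi {p : ℕ} (lam : ℝ) (Δ : Matrix (Fin p) (Fin p) ℝ) : ℝ :=
  sInf {x : ℝ | ∃ L S : Matrix (Fin p) (Fin p) ℝ, L + S = Δ ∧ x = nuclearNorm L + lam * l1Norm S}

/-!
Absorbing into `L * B` the part of `A` in the column space of `L` turns `A * Vᵀ - L * B` into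
`L * D + C * Vᵀ` with `Lᵀ * C = 0`. The two summands are then Frobenius-orthogonal and, as the
columns of `L` and `V` are orthonormal, the squared norm of the sum is `‖D‖² + ‖C‖²`. By
Cauchy–Schwarz their `(i, j)` entries are at most `‖L i‖ ‖D‖` and `‖V j‖ ‖C‖`, so the squared entry
of the sum is at most `(‖L i‖² + ‖V j‖²) (‖D‖² + ‖C‖²)`. Incoherence bounds the two row norms, which
gives a constant linear in the rank.
-/

theorem add_sq_le_add_mul_add_of_sq_le_mul {R : Type*} [CommSemiring R] [LinearOrder R]
    [IsStrictOrderedRing R] [ExistsAddOfLE R] {a b c d x y : R} (ha : 0 ≤ a) (hb : 0 ≤ b)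
    (hc : 0 ≤ c) (hd : 0 ≤ d) (hx : x ^ 2 ≤ a * c) (hy : y ^ 2 ≤ b * d) :
    (x + y) ^ 2 ≤ (a + b) * (c + d) := by
  simpa using Finset.sum_sq_le_sum_mul_sum_of_sq_le_mul Finset.univ
    (r := ![x, y]) (f := ![a, b]) (g := ![c, d])
    (by simp [ha, hb]) (by simp [hc, hd]) (by simp [hx, hy])

section Frobenius

variable {ι k l m n : Type*} [Fintype k] [Fintype l] [Fintype m]

theorem exists_orthogonal_decomp_mul_transpose_sub_mul [DecidableEq k]
    {L : Matrix m k ℝ} (hL : Lᵀ * L = 1) (V : Matrix n l ℝ) (A : Matrix m l ℝ)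
    (B : Matrix k n ℝ) :
    ∃ (C : Matrix m l ℝ) (D : Matrix k n ℝ),
      Lᵀ * C = 0 ∧ A * Vᵀ - L * B = L * D + C * Vᵀ := by
  refine ⟨A - L * (Lᵀ * A), Lᵀ * A * Vᵀ - B, ?_, ?_⟩
  · rw [Matrix.mul_sub, ← Matrix.mul_assoc, hL, Matrix.one_mul, sub_self]
  · rw [Matrix.mul_sub, Matrix.sub_mul]
    simp only [Matrix.mul_assoc]
    abel

variable [Fintype n]

theorem frobNorm_sq (M : Matrix m n ℝ) : frobNorm M ^ 2 = ∑ i, ∑ j, M i j ^ 2 :=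
  Real.sq_sqrt (Finset.sum_nonneg fun _ _ => Finset.sum_nonneg fun _ _ => sq_nonneg _)

theorem frobNorm_transpose (M : Matrix m n ℝ) : frobNorm Mᵀ = frobNorm M := by
  simp only [frobNorm, transpose_apply]
  rw [Finset.sum_comm]

theorem frobNorm_sq_eq_trace (M : Matrix m n ℝ) : frobNorm M ^ 2 = (Mᵀ * M).trace := by
  rw [← frobNorm_transpose, frobNorm_sq]
  simp only [trace, diag_apply, mul_apply, transpose_apply, sq]

theorem frobNorm_add_sq_of_transpose_mul_eq_zero {M N : Matrix m n ℝ} (h : Mᵀ * N = 0) :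
    frobNorm (M + N) ^ 2 = frobNorm M ^ 2 + frobNorm N ^ 2 := by
  have h' : Nᵀ * M = 0 := by rw [← transpose_transpose M, ← transpose_mul, h, transpose_zero]
  simp only [frobNorm_sq_eq_trace, transpose_add, Matrix.add_mul, Matrix.mul_add, h, h',
    trace_add, add_zero, zero_add]

theorem frobNorm_mul_sq_of_transpose_mul_self_eq_one [DecidableEq k] {L : Matrix m k ℝ}
    (hL : Lᵀ * L = 1) (B : Matrix k n ℝ) : frobNorm (L * B) ^ 2 = frobNorm B ^ 2 := by
  rw [frobNorm_sq_eq_trace, frobNorm_sq_eq_trace, transpose_mul, Matrix.mul_assoc,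
    ← Matrix.mul_assoc Lᵀ, hL, Matrix.one_mul]

theorem mul_apply_sq_le_sum_sq_mul_frobNorm_sq (L : Matrix ι k ℝ) (B : Matrix k n ℝ)
    (i : ι) (j : n) : (L * B) i j ^ 2 ≤ (∑ a, L i a ^ 2) * frobNorm B ^ 2 := by
  have hcol : ∑ a, B a j ^ 2 ≤ frobNorm B ^ 2 := by
    rw [frobNorm_sq]
    exact Finset.sum_le_sum fun a _ =>
      Finset.single_le_sum (fun b _ => sq_nonneg (B a b)) (Finset.mem_univ j)
  calc (L * B) i j ^ 2 ≤ (∑ a, L i a ^ 2) * ∑ a, B a j ^ 2 := Finset.sum_mul_sq_le_sq_mul_sq _ _ _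
    _ ≤ (∑ a, L i a ^ 2) * frobNorm B ^ 2 := by gcongr

theorem frobNorm_mul_add_mul_transpose_sq [DecidableEq k] [DecidableEq l]
    {L : Matrix m k ℝ} {V : Matrix n l ℝ} {C : Matrix m l ℝ} (hL : Lᵀ * L = 1) (hV : Vᵀ * V = 1)
    (hC : Lᵀ * C = 0) (D : Matrix k n ℝ) :
    frobNorm (L * D + C * Vᵀ) ^ 2 = frobNorm D ^ 2 + frobNorm C ^ 2 := by
  have horth : (L * D)ᵀ * (C * Vᵀ) = 0 := by
    rw [transpose_mul, Matrix.mul_assoc, ← Matrix.mul_assoc Lᵀ, hC, Matrix.zero_mul,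
      Matrix.mul_zero]
  have hCV : frobNorm (C * Vᵀ) ^ 2 = frobNorm C ^ 2 := by
    rw [← frobNorm_transpose, transpose_mul, transpose_transpose,
      frobNorm_mul_sq_of_transpose_mul_self_eq_one hV, frobNorm_transpose]
  rw [frobNorm_add_sq_of_transpose_mul_eq_zero horth, hCV,
    frobNorm_mul_sq_of_transpose_mul_self_eq_one hL]

theorem mul_transpose_sub_mul_apply_sq_le [DecidableEq k] [DecidableEq l]
    {L : Matrix m k ℝ} {V : Matrix n l ℝ} (hL : Lᵀ * L = 1) (hV : Vᵀ * V = 1)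
    (A : Matrix m l ℝ) (B : Matrix k n ℝ) (i : m) (j : n) :
    (A * Vᵀ - L * B) i j ^ 2 ≤
      (∑ a, L i a ^ 2 + ∑ b, V j b ^ 2) * frobNorm (A * Vᵀ - L * B) ^ 2 := by
  obtain ⟨C, D, hC, hCD⟩ := exists_orthogonal_decomp_mul_transpose_sub_mul hL V A B
  have hLD : (L * D) i j ^ 2 ≤ (∑ a, L i a ^ 2) * frobNorm D ^ 2 :=
    mul_apply_sq_le_sum_sq_mul_frobNorm_sq L D i j
  have hCV : (C * Vᵀ) i j ^ 2 ≤ (∑ b, V j b ^ 2) * frobNorm C ^ 2 := by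
    rw [← transpose_apply (C * Vᵀ), transpose_mul, transpose_transpose, ← frobNorm_transpose C]
    exact mul_apply_sq_le_sum_sq_mul_frobNorm_sq V Cᵀ j i
  rw [hCD, frobNorm_mul_add_mul_transpose_sq hL hV hC, Matrix.add_apply]
  exact add_sq_le_add_mul_add_of_sq_le_mul (Finset.sum_nonneg fun a _ => sq_nonneg (L i a))
    (Finset.sum_nonneg fun b _ => sq_nonneg (V j b)) (sq_nonneg _) (sq_nonneg _) hLD hCV

end Frobenius

theorem maxNorm_sq_le {m n : Type*} [Fintype m] [Fintype n] {M : Matrix m n ℝ} {K : ℝ}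
    (hK : 0 ≤ K) (h : ∀ i j, M i j ^ 2 ≤ K) : maxNorm M ^ 2 ≤ K := by
  have hle : maxNorm M ≤ √K :=
    Real.iSup_le (fun i => Real.iSup_le (fun j => Real.abs_le_sqrt (h i j)) K.sqrt_nonneg)
      K.sqrt_nonneg
  have hnonneg : 0 ≤ maxNorm M :=
    Real.iSup_nonneg fun i => Real.iSup_nonneg fun j => abs_nonneg _
  exact (Real.le_sqrt hnonneg hK).1 hle

theorem Incoherent.sum_sq_le {p r : ℕ} {μ : ℝ} (hμ : 0 ≤ μ) {U : Matrix (Fin p) (Fin r) ℝ}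
    (hU : Incoherent μ U) (i : Fin p) : ∑ j, U i j ^ 2 ≤ μ * r / p :=
  (Real.sqrt_le_sqrt_iff (by positivity)).1 (hU i)

theorem mul_div_add_mul_div_le_two_mul_pow_four_div {μ : ℝ} (hμ : 0 ≤ μ) (p r : ℕ) :
    μ * r / p + μ * r / p ≤ 2 * μ * (r : ℝ) ^ 4 / p := by
  have hr : (r : ℝ) ≤ (r : ℝ) ^ 4 := by exact_mod_cast Nat.le_self_pow four_ne_zero r
  rw [← two_mul, ← mul_div_assoc, ← mul_assoc]
  gcongr

theorem stmt3_general {p q r s : ℕ} {μ ν : ℝ} (hμ : 0 ≤ μ) (hν : 0 ≤ ν)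
    {L : Matrix (Fin p) (Fin r) ℝ} {V : Matrix (Fin q) (Fin s) ℝ}
    (hL : Lᵀ * L = 1) (hV : Vᵀ * V = 1) (hLμ : Incoherent μ L) (hVν : Incoherent ν V)
    (A : Matrix (Fin p) (Fin s) ℝ) (B : Matrix (Fin r) (Fin q) ℝ)
    {Δ : Matrix (Fin p) (Fin q) ℝ} (hΔ : Δ = A * Vᵀ - L * B) :
    maxNorm Δ ^ 2 ≤ (μ * r / p + ν * s / q) * frobNorm Δ ^ 2 ∧
      (Δ ≠ 0 → maxNorm Δ ^ 2 / frobNorm Δ ^ 2 ≤ μ * r / p + ν * s / q) := by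
  have hmax : maxNorm Δ ^ 2 ≤ (μ * r / p + ν * s / q) * frobNorm Δ ^ 2 := by
    refine maxNorm_sq_le (by positivity) fun i j => ?_
    rw [hΔ]
    refine (mul_transpose_sub_mul_apply_sq_le hL hV A B i j).trans ?_
    gcongr
    exacts [hLμ.sum_sq_le hμ i, hVν.sum_sq_le hν j]
  exact ⟨hmax, fun _ => div_le_of_le_mul₀ (sq_nonneg _) (by positivity) hmax⟩

/-- the key separation lemma — the difference of two incoherent
low-rank matrices must spread its energy: ‖Δ‖_max² ≤ (c̃ μ r⁴ / p) ‖Δ‖_F². -/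
theorem stmt3 :
    ∃ c : ℝ, 0 < c ∧
      ∀ (p r : ℕ), 0 < r → r ≤ p →
        ∀ (μ : ℝ), 0 < μ →
          ∀ (U V L R : Matrix (Fin p) (Fin r) ℝ) (σ lam : Fin r → ℝ),
            Uᵀ * U = 1 → Vᵀ * V = 1 → Lᵀ * L = 1 → Rᵀ * R = 1 →
            Incoherent μ U → Incoherent μ V → Incoherent μ L → Incoherent μ R →
            Antitone σ → (∀ i, 0 ≤ σ i) → Antitone lam → (∀ i, 0 ≤ lam i) →
            ∀ Δ : Matrix (Fin p) (Fin p) ℝ,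
              Δ = U * Matrix.diagonal σ * Vᵀ - L * Matrix.diagonal lam * Rᵀ →
              maxNorm Δ ^ 2 ≤ (c * μ * (r : ℝ) ^ 4 / p) * frobNorm Δ ^ 2 ∧
                (Δ ≠ 0 → maxNorm Δ ^ 2 / frobNorm Δ ^ 2 ≤ c * μ * (r : ℝ) ^ 4 / p) := by
  refine ⟨2, two_pos, fun p r _ _ μ hμ U V L R σ lam _ hV hL _ _ hVμ hLμ _ _ _ _ _ Δ hΔ => ?_⟩
  have hconst := mul_div_add_mul_div_le_two_mul_pow_four_div hμ.le p r
  exact (stmt3_general hμ.le hμ.le hL hV hLμ hVμ _ _ (hΔ.trans (by rw [Matrix.mul_assoc L]))).imp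
    (·.trans (by gcongr)) fun hratio hne => (hratio hne).trans hconst
end

section
/- Let p > r ≥ 2 be integers and μ > 0 with μ r ≤ p/8. Let U, V, L, R ∈ O_{p,r} all be μ-incoherent. Suppose the first rows satisfy Uᵀe₁ = a·e₁ and Lᵀe₁ = b·e₁ for reals a, b with 0 ≤ a ≤ b. Then r − ⟨UᵀL, VᵀR⟩ ≥ (p/(8 μ r))·R_{1,1}²·(a − b)², where R_{1,1} is the (1,1) entry of R and ⟨A,B⟩ = Tr(A Bᵀ) is the Frobenius inner product. -/
open Matrix
open scoped BigOperators RealInnerProductSpace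

/-!
Moving the factors around in the trace gives `⟨UᵀL, VᵀR⟩ = ⟨UVᵀ, LRᵀ⟩`. Since `V` and `R` act
isometrically, the `i`-th rows of `UVᵀ` and `LRᵀ` have the norms `uᵢ` and `lᵢ` of the `i`-th rows of
`U` and `L`, so Cauchy–Schwarz in each row bounds the inner product by `∑ uᵢ lᵢ`. As
`∑ uᵢ² = ∑ lᵢ² = r`, the discrepancy `r - ⟨UᵀL, VᵀR⟩` is at least `½ ∑ (uᵢ - lᵢ)²`. Keep one
term of this sum; the factor `R₁₁²` is absorbed by incoherence, which gives `R₁₁² ≤ μ r / p`.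
-/

section RowNorm

variable {m n k l : Type*} [Fintype n] [Fintype k] [Fintype l]

/-- The Euclidean norm of the `i`-th row of `A`, through which orthonormal frames are compared.
The row is passed to `EuclideanSpace` because functions carry the sup norm. -/
noncomputable def rowNorm (A : Matrix m k ℝ) (i : m) : ℝ :=
  ‖WithLp.toLp 2 (A.row i)‖

theorem rowNorm_nonneg (A : Matrix m k ℝ) (i : m) : 0 ≤ rowNorm A i :=
  norm_nonneg _

theorem rowNorm_sq (A : Matrix m k ℝ) (i : m) : rowNorm A i ^ 2 = A.row i ⬝ᵥ A.row i := by
  rw [rowNorm, EuclideanSpace.real_norm_sq_eq]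
  simp only [dotProduct, sq]

theorem rowNorm_eq_of_eq_ite [DecidableEq k] {A : Matrix m k ℝ} {i : m} {j : k} {a : ℝ}
    (ha : 0 ≤ a) (hA : ∀ j', A i j' = if j' = j then a else 0) : rowNorm A i = a := by
  have row_eq : A.row i = Pi.single j a := funext fun j' => by rw [Pi.single_apply]; exact hA j'
  rw [rowNorm, row_eq, PiLp.toLp_single, PiLp.norm_single, Real.norm_of_nonneg ha]

theorem rowNorm_mul_transpose [DecidableEq k] (U : Matrix m k ℝ) {V : Matrix n k ℝ}
    (hV : Vᵀ * V = 1) (i : m) : rowNorm (U * Vᵀ) i = rowNorm U i := by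
  have row_eq : (U * Vᵀ).row i = V *ᵥ U.row i := by
    rw [← vecMul_transpose]
    rfl
  rw [← sq_eq_sq₀ (rowNorm_nonneg _ i) (rowNorm_nonneg U i), rowNorm_sq, rowNorm_sq, row_eq,
    dotProduct_mulVec, vecMul_mulVec, hV, vecMul_one]

variable [Fintype m]

theorem sum_sq_rowNorm [DecidableEq k] {U : Matrix m k ℝ} (hU : Uᵀ * U = 1) :
    ∑ i, rowNorm U i ^ 2 = Fintype.card k :=
  calc ∑ i, rowNorm U i ^ 2 = (U * Uᵀ).trace := Finset.sum_congr rfl fun i _ => rowNorm_sq U i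
    _ = Fintype.card k := by rw [trace_mul_comm, hU, trace_one]

theorem frobInner_eq_trace (A B : Matrix m n ℝ) : frobInner A B = (A * Bᵀ).trace :=
  rfl

theorem frobInner_transpose_mul_transpose_mul (U : Matrix m k ℝ) (V : Matrix n k ℝ)
    (L : Matrix m l ℝ) (R : Matrix n l ℝ) :
    frobInner (Uᵀ * L) (Vᵀ * R) = frobInner (U * Vᵀ) (L * Rᵀ) := by
  rw [frobInner_eq_trace, frobInner_eq_trace, ← trace_transpose (U * Vᵀ * _)]
  simp only [transpose_mul, transpose_transpose, Matrix.mul_assoc]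
  rw [trace_mul_comm]
  simp only [Matrix.mul_assoc]

theorem frobInner_le_sum_rowNorm_mul_rowNorm (A B : Matrix m n ℝ) :
    frobInner A B ≤ ∑ i, rowNorm A i * rowNorm B i := by
  refine Finset.sum_le_sum fun i _ => ?_
  simpa [rowNorm, PiLp.inner_apply, mul_comm] using
    real_inner_le_norm (WithLp.toLp 2 (A.row i)) (WithLp.toLp 2 (B.row i))

variable [DecidableEq k] {U L : Matrix m k ℝ} {V R : Matrix n k ℝ}

theorem half_sum_sq_rowNorm_sub_le_card_sub_frobInner (hU : Uᵀ * U = 1) (hV : Vᵀ * V = 1)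
    (hL : Lᵀ * L = 1) (hR : Rᵀ * R = 1) :
    (∑ i, (rowNorm U i - rowNorm L i) ^ 2) / 2 ≤
      Fintype.card k - frobInner (Uᵀ * L) (Vᵀ * R) := by
  have inner_le : frobInner (Uᵀ * L) (Vᵀ * R) ≤ ∑ i, rowNorm U i * rowNorm L i := by
    simpa only [frobInner_transpose_mul_transpose_mul, rowNorm_mul_transpose _ hV,
      rowNorm_mul_transpose _ hR] using
      frobInner_le_sum_rowNorm_mul_rowNorm (U * Vᵀ) (L * Rᵀ)
  have expand : ∑ i, (rowNorm U i - rowNorm L i) ^ 2 =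
      2 * (Fintype.card k - ∑ i, rowNorm U i * rowNorm L i) := by
    simp only [sub_sq, Finset.sum_add_distrib, Finset.sum_sub_distrib, sum_sq_rowNorm hU,
      sum_sq_rowNorm hL, mul_assoc, ← Finset.mul_sum]
    ring
  linarith

theorem half_sq_rowNorm_sub_le_card_sub_frobInner (hU : Uᵀ * U = 1) (hV : Vᵀ * V = 1)
    (hL : Lᵀ * L = 1) (hR : Rᵀ * R = 1) (i : m) :
    (rowNorm U i - rowNorm L i) ^ 2 / 2 ≤ Fintype.card k - frobInner (Uᵀ * L) (Vᵀ * R) := by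
  have single_le := Finset.single_le_sum (f := fun i => (rowNorm U i - rowNorm L i) ^ 2)
    (fun _ _ => sq_nonneg _) (Finset.mem_univ i)
  linarith [half_sum_sq_rowNorm_sub_le_card_sub_frobInner hU hV hL hR]

end RowNorm

theorem Incoherent.sq_apply_le {p r : ℕ} {μ : ℝ} {X : Matrix (Fin p) (Fin r) ℝ}
    (hX : Incoherent μ X) (hμ : 0 ≤ μ) (i : Fin p) (j : Fin r) : X i j ^ 2 ≤ μ * r / p :=
  calc X i j ^ 2 ≤ ∑ j', X i j' ^ 2 :=
        Finset.single_le_sum (f := fun j' => X i j' ^ 2) (fun _ _ => sq_nonneg _)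
          (Finset.mem_univ j)
    _ ≤ μ * r / p := (Real.sqrt_le_sqrt_iff (by positivity)).1 (hX i)

theorem stmt7_general {m : Type*} [Fintype m] {p r : ℕ} {μ : ℝ} (hμ : 0 < μ)
    {U L : Matrix m (Fin r) ℝ} {V R : Matrix (Fin p) (Fin r) ℝ}
    (hU : Uᵀ * U = 1) (hV : Vᵀ * V = 1) (hL : Lᵀ * L = 1) (hR : Rᵀ * R = 1)
    (hRi : Incoherent μ R) (i : m) (i' : Fin p) (j : Fin r) :
    (p : ℝ) / (2 * μ * r) * R i' j ^ 2 * (rowNorm U i - rowNorm L i) ^ 2 ≤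
      r - frobInner (Uᵀ * L) (Vᵀ * R) := by
  have coeff_le : (p : ℝ) / (2 * μ * r) * R i' j ^ 2 ≤ 1 / 2 :=
    calc (p : ℝ) / (2 * μ * r) * R i' j ^ 2 ≤ p / (2 * μ * r) * (μ * r / p) := by
          gcongr
          exact hRi.sq_apply_le hμ.le i' j
      _ = 1 / 2 * ((μ * r / p) * (μ * r / p)⁻¹) := by rw [inv_div]; ring
      _ ≤ 1 / 2 := mul_le_of_le_one_right (by norm_num) mul_inv_le_one
  calc (p : ℝ) / (2 * μ * r) * R i' j ^ 2 * (rowNorm U i - rowNorm L i) ^ 2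
      ≤ 1 / 2 * (rowNorm U i - rowNorm L i) ^ 2 := by gcongr
    _ = (rowNorm U i - rowNorm L i) ^ 2 / 2 := by ring
    _ ≤ r - frobInner (Uᵀ * L) (Vᵀ * R) := by
      simpa only [Fintype.card_fin] using
        half_sq_rowNorm_sub_le_card_sub_frobInner hU hV hL hR i

/-- discrepancy lemma for the norms a, b of the first rows —
r − ⟨UᵀL, VᵀR⟩ ≥ (p/(8μr))·R₁₁²·(a−b)². -/
theorem stmt7 (p r : ℕ) (hr2 : 2 ≤ r) (hrp : r < p)
    (μ : ℝ) (hμ : 0 < μ) (hμr : μ * (r : ℝ) ≤ (p : ℝ) / 8)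
    (U V L R : Matrix (Fin p) (Fin r) ℝ)
    (hUo : Uᵀ * U = 1) (hVo : Vᵀ * V = 1) (hLo : Lᵀ * L = 1) (hRo : Rᵀ * R = 1)
    (hUi : Incoherent μ U) (hVi : Incoherent μ V)
    (hLi : Incoherent μ L) (hRi : Incoherent μ R)
    (a b : ℝ) (ha : 0 ≤ a) (hab : a ≤ b)
    (hUrow : ∀ j : Fin r, U ⟨0, by omega⟩ j = if j = ⟨0, by omega⟩ then a else 0)
    (hLrow : ∀ j : Fin r, L ⟨0, by omega⟩ j = if j = ⟨0, by omega⟩ then b else 0) :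
    (r : ℝ) - frobInner (Uᵀ * L) (Vᵀ * R) ≥
      ((p : ℝ) / (8 * μ * (r : ℝ))) *
        (R ⟨0, by omega⟩ (⟨0, by omega⟩ : Fin r)) ^ 2 * (a - b) ^ 2 := by
  have coeff_le : (p : ℝ) / (8 * μ * r) ≤ p / (2 * μ * r) := by gcongr; norm_num
  rw [← rowNorm_eq_of_eq_ite ha hUrow, ← rowNorm_eq_of_eq_ite (ha.trans hab) hLrow]
  exact le_trans (by gcongr) (stmt7_general hμ hUo hVo hLo hRo hRi _ _ _)
end
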